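/- For every odd integer m > 1, the real polynomial Bohnenblust–Hille constant satisfies D_{ℝ,m} ≥ (4·3^{(m−1)/2})^{(m+1)/(2m)} / (2·(5/4)^{(m−1)/2}), and in particular D_{ℝ,m} ≥ (2·3^{1/4}/√5)^{m−1}. -/

import Mathlib

open MvPolynomial Filter

/-- The sup norm of a real polynomial in `n` variables over the cube `[-1,1]^n`. -/
noncomputable def supNorm {n : ℕ} (P : MvPolynomial (Fin n) ℝ) : ℝ :=
  sSup {y : ℝ | ∃ x : Fin n → ℝ, (∀ i, |x i| ≤ 1) ∧ y = |eval x P|}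

/-- The `ℓ_p` norm of the coefficients of a real polynomial. -/
noncomputable def lpNorm {n : ℕ} (p : ℝ) (P : MvPolynomial (Fin n) ℝ) : ℝ :=
  (∑ α ∈ P.support, |coeff α P| ^ p) ^ (1 / p)

/-- The real polynomial Bohnenblust–Hille constant `D_{ℝ,m}`. -/
noncomputable def BHconst (m : ℕ) : ℝ :=
  sInf {D : ℝ | 0 < D ∧ ∀ (n : ℕ) (P : MvPolynomial (Fin n) ℝ),
    P.IsHomogeneous m → lpNorm (2 * m / (m + 1)) P ≤ D * supNorm P}

/-- The real polynomial Bohnenblust–Hille constant `D_{ℝ,m}(n)` in a fixed number `n`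
of variables. -/
noncomputable def BHconstN (m n : ℕ) : ℝ :=
  sInf {D : ℝ | 0 < D ∧ ∀ P : MvPolynomial (Fin n) ℝ,
    P.IsHomogeneous m → lpNorm (2 * m / (m + 1)) P ≤ D * supNorm P}


section KH
variable {ι : Type*} [DecidableEq ι]

noncomputable def Fw (U : Finset ι) (c : Finset ι → ℝ) (T : Finset ι) : ℝ :=
  ∑ S ∈ U.powerset, c S * ∏ x ∈ S, (if x ∈ T then (-1 : ℝ) else 1)

lemma Fw_insert1 {a : ι} {U T : Finset ι} (ha : a ∉ U) (hT : T ⊆ U) (c : Finset ι → ℝ) :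
    Fw (insert a U) c T = Fw U c T + Fw U (fun S => c (insert a S)) T := by
  unfold Fw
  rw [Finset.sum_powerset_insert ha]
  congr 1
  refine Finset.sum_congr rfl fun S hS => ?_
  have hS' : a ∉ S := fun h => ha (Finset.mem_powerset.1 hS h)
  rw [Finset.prod_insert hS', if_neg (fun h => ha (hT h)), one_mul]

lemma Fw_insert2 {a : ι} {U T : Finset ι} (ha : a ∉ U) (_hT : T ⊆ U) (c : Finset ι → ℝ) :
    Fw (insert a U) c (insert a T) = Fw U c T - Fw U (fun S => c (insert a S)) T := by
  unfold Fw
  rw [Finset.sum_powerset_insert ha, sub_eq_add_neg, ← Finset.sum_neg_distrib]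
  have key : ∀ S ∈ U.powerset, ∏ x ∈ S, (if x ∈ insert a T then (-1 : ℝ) else 1)
      = ∏ x ∈ S, (if x ∈ T then (-1 : ℝ) else 1) := by
    intro S hS
    refine Finset.prod_congr rfl fun x hx => ?_
    have : x ≠ a := fun h => ha (h ▸ Finset.mem_powerset.1 hS hx)
    simp [Finset.mem_insert, this]
  congr 1
  · exact Finset.sum_congr rfl fun S hS => by rw [key S hS]
  · refine Finset.sum_congr rfl fun S hS => ?_
    have hS' : a ∉ S := fun h => ha (Finset.mem_powerset.1 hS h)
    rw [Finset.prod_insert hS', key S hS]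
    simp

lemma parseval (U : Finset ι) : ∀ c : Finset ι → ℝ,
    ∑ T ∈ U.powerset, (Fw U c T) ^ 2 = 2 ^ U.card * ∑ S ∈ U.powerset, (c S) ^ 2 := by
  induction U using Finset.induction_on with
  | empty => intro c; simp [Fw]
  | insert a U ha ih =>
    intro c
    rw [Finset.sum_powerset_insert ha, Finset.sum_powerset_insert ha, Finset.card_insert_of_notMem ha,
      ← Finset.sum_add_distrib]
    have : ∑ T ∈ U.powerset, (Fw (insert a U) c T ^ 2 + Fw (insert a U) c (insert a T) ^ 2)
      = ∑ T ∈ U.powerset, (2 * Fw U c T ^ 2 + 2 * Fw U (fun S => c (insert a S)) T ^ 2) := by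
      refine Finset.sum_congr rfl fun T hT => ?_
      rw [Fw_insert1 ha (Finset.mem_powerset.1 hT), Fw_insert2 ha (Finset.mem_powerset.1 hT)]
      ring
    rw [this, Finset.sum_add_distrib, ← Finset.mul_sum, ← Finset.mul_sum, ih, ih]
    ring

lemma bonami (U : Finset ι) : ∀ (r : ℕ) (c : Finset ι → ℝ),
    (∀ S ∈ U.powerset, r < S.card → c S = 0) →
    ∑ T ∈ U.powerset, (Fw U c T) ^ 4 ≤ 2 ^ U.card * (9 ^ r * (∑ S ∈ U.powerset, (c S) ^ 2) ^ 2) := by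
  induction U using Finset.induction_on with
  | empty =>
    intro r c _
    have : (1 : ℝ) ≤ 9 ^ r := one_le_pow₀ (by norm_num)
    have h2 : 0 ≤ c ∅ ^ 4 := by positivity
    simp [Fw]
    nlinarith
  | insert a U ha ih =>
    intro r c hc
    set d : Finset ι → ℝ := fun S => c (insert a S) with hd
    rw [Finset.sum_powerset_insert ha, Finset.sum_powerset_insert ha, Finset.card_insert_of_notMem ha,
      ← Finset.sum_add_distrib]
    have e : ∑ T ∈ U.powerset, (Fw (insert a U) c T ^ 4 + Fw (insert a U) c (insert a T) ^ 4)
      = 2 * ∑ T ∈ U.powerset, Fw U c T ^ 4 + 12 * ∑ T ∈ U.powerset, Fw U c T ^ 2 * Fw U d T ^ 2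
        + 2 * ∑ T ∈ U.powerset, Fw U d T ^ 4 := by
      rw [Finset.mul_sum, Finset.mul_sum, Finset.mul_sum, ← Finset.sum_add_distrib,
        ← Finset.sum_add_distrib]
      refine Finset.sum_congr rfl fun T hT => ?_
      rw [Fw_insert1 ha (Finset.mem_powerset.1 hT), Fw_insert2 ha (Finset.mem_powerset.1 hT)]
      ring
    rw [e]
    have hcU : ∀ S ∈ U.powerset, r < S.card → c S = 0 := fun S hS h =>
      hc S (Finset.mem_powerset.2 ((Finset.mem_powerset.1 hS).trans (Finset.subset_insert _ _))) h
    have hG := ih r c hcU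
    have hg0 : 0 ≤ ∑ S ∈ U.powerset, c S ^ 2 := Finset.sum_nonneg fun _ _ => sq_nonneg _
    have hh0 : 0 ≤ ∑ S ∈ U.powerset, d S ^ 2 := Finset.sum_nonneg fun _ _ => sq_nonneg _
    rcases r with _ | r
    · have hd0 : ∀ S ∈ U.powerset, d S = 0 := by
        intro S hS
        refine hc _ ?_ ?_
        · exact Finset.mem_powerset.2 (Finset.insert_subset_insert _ (Finset.mem_powerset.1 hS))
        · exact Finset.card_pos.2 ⟨a, Finset.mem_insert_self _ _⟩
      have hF0 : ∀ T, Fw U d T = 0 := fun T =>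
        Finset.sum_eq_zero fun S hS => by rw [hd0 S hS, zero_mul]
      have : ∑ S ∈ U.powerset, d S ^ 2 = 0 := Finset.sum_eq_zero fun S hS => by rw [hd0 S hS]; norm_num
      change _ ≤ 2 ^ (U.card + 1) * (9 ^ 0 * (∑ S ∈ U.powerset, c S ^ 2 + ∑ S ∈ U.powerset, d S ^ 2) ^ 2)
      rw [this]
      simp only [hF0]
      simp at hG ⊢
      rw [pow_succ]
      nlinarith
    · have hH := ih r d (by
        intro S hS h
        refine hc _ (Finset.mem_powerset.2 (Finset.insert_subset_insert _ (Finset.mem_powerset.1 hS))) ?_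
        rw [Finset.card_insert_of_notMem (fun h => ha (Finset.mem_powerset.1 hS h))]
        omega)
      have hCS := Finset.sum_mul_sq_le_sq_mul_sq U.powerset (fun T => Fw U c T ^ 2) (fun T => Fw U d T ^ 2)
      simp only [← pow_mul] at hCS
      norm_num at hCS
      change _ ≤ 2 ^ (U.card + 1) * (9 ^ (r+1) * (∑ S ∈ U.powerset, c S ^ 2 + ∑ S ∈ U.powerset, d S ^ 2) ^ 2)
      set g := ∑ S ∈ U.powerset, c S ^ 2
      set h := ∑ S ∈ U.powerset, d S ^ 2
      set G := ∑ T ∈ U.powerset, Fw U c T ^ 4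
      set H := ∑ T ∈ U.powerset, Fw U d T ^ 4
      set X := ∑ T ∈ U.powerset, Fw U c T ^ 2 * Fw U d T ^ 2
      have hH0 : 0 ≤ H := Finset.sum_nonneg fun _ _ => by positivity
      have hX : X ≤ 2 ^ U.card * (3 * 9 ^ r * g * h) := by
        refine le_of_sq_le_sq ?_ (by positivity) 
        calc X ^ 2 ≤ G * H := hCS
          _ ≤ (2 ^ U.card * (9 ^ (r+1) * g ^ 2)) * (2 ^ U.card * (9 ^ r * h ^ 2)) := by gcongr
          _ = _ := by ring
      have hp : (0:ℝ) ≤ 2 ^ U.card * 9 ^ r * h ^ 2 := by positivity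
      calc 2 * G + 12 * X + 2 * H ≤ 2 * (2 ^ U.card * (9 ^ (r+1) * g ^ 2)) + 12 * (2 ^ U.card * (3 * 9 ^ r * g * h)) + 2 * (2 ^ U.card * (9 ^ r * h ^ 2)) := by gcongr
        _ ≤ _ := by
          ring_nf at hp ⊢
          linarith

lemma khinchine [Fintype ι] {κ : Type*} [Fintype κ] (r : ℕ) (f : κ → Finset ι)
    (hf : Function.Injective f) (hr : ∀ i, (f i).card ≤ r) (c : κ → ℝ) :
    2 ^ Fintype.card ι * Real.sqrt (∑ i, c i ^ 2) ≤ 4 * 3 ^ r *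
      ∑ T : Finset ι, |∑ i, c i * ∏ x ∈ f i, (if x ∈ T then (-1 : ℝ) else 1)| := by
  classical
  set C : Finset ι → ℝ := Function.extend f c 0 with hCdef
  have hC0 : ∀ S, S ∉ f '' (Set.univ) → C S = 0 := by
    intro S hS
    refine Function.extend_apply' _ _ _ ?_
    rintro ⟨a, rfl⟩; exact hS ⟨a, trivial, rfl⟩
  have hF : ∀ T, Fw Finset.univ C T = ∑ i, c i * ∏ x ∈ f i, (if x ∈ T then (-1 : ℝ) else 1) := by
    intro T
    symm
    refine Finset.sum_of_injOn f hf.injOn (fun _ _ => by simp) ?_ ?_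
    · intro S _ hS
      rw [hC0 S (by simpa using hS), zero_mul]
    · intro i _
      rw [hCdef, hf.extend_apply]
  have hS2 : ∑ S ∈ Finset.univ.powerset, C S ^ 2 = ∑ i, c i ^ 2 := by
    symm
    refine Finset.sum_of_injOn f hf.injOn (fun _ _ => by simp) ?_ ?_
    · intro S _ hS
      rw [hC0 S (by simpa using hS)]; norm_num
    · intro i _
      rw [hCdef, hf.extend_apply]
  have h2 := parseval (Finset.univ : Finset ι) C
  have h4 := bonami (Finset.univ : Finset ι) r C (by
    intro S _ hS
    refine hC0 S ?_
    rintro ⟨i, _, rfl⟩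
    exact absurd (hr i) (by omega))
  rw [hS2] at h2 h4
  simp only [← hF]
  rw [Finset.powerset_univ] at h2 h4
  rw [Finset.card_univ] at h2 h4
  set t := Real.sqrt (∑ i, c i ^ 2) with ht
  have hts : ∑ i, c i ^ 2 = t ^ 2 := (Real.sq_sqrt (Finset.sum_nonneg fun _ _ => sq_nonneg _)).symm
  rw [hts] at h2 h4
  have ht0 : 0 ≤ t := Real.sqrt_nonneg _
  rcases ht0.eq_or_lt with h0 | htp
  · rw [← h0]; simp; positivity
  set F := Fw Finset.univ C
  set N : ℝ := 2 ^ Fintype.card ι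
  have hpt : ∀ T, 2 * 9 ^ r * t ^ 2 * F T ^ 2 ≤ 4 * 27 ^ r * t ^ 3 * |F T| + F T ^ 4 := by
    intro T
    have e2 : F T ^ 2 = |F T| ^ 2 := (sq_abs _).symm
    have e4 : F T ^ 4 = |F T| ^ 4 := (Even.pow_abs ⟨2, rfl⟩ _).symm
    rw [e2, e4]
    have hx := abs_nonneg (F T)
    set x := |F T|
    have h9 : (9:ℝ) ^ r = (3 ^ r) ^ 2 := by rw [← pow_mul, mul_comm, pow_mul]; norm_num
    have h27 : (27:ℝ) ^ r = (3 ^ r) ^ 3 := by rw [← pow_mul, mul_comm, pow_mul]; norm_num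
    rw [h9, h27]
    have h3 : (0:ℝ) < 3 ^ r := by positivity
    set K : ℝ := 3 ^ r
    rcases le_total x (2 * K * t) with hle | hle
    · have : 2 * K ^ 2 * t ^ 2 * x ^ 2 ≤ 4 * K ^ 3 * t ^ 3 * x := by
        have := mul_le_mul_of_nonneg_left hle (show 0 ≤ 2 * K ^ 2 * t ^ 2 * x by positivity)
        nlinarith
      have : 0 ≤ x ^ 4 := by positivity
      linarith
    · have h1 : (2 * K * t) ^ 2 ≤ x ^ 2 := by gcongr
      have h2 := mul_le_mul_of_nonneg_right h1 (sq_nonneg x)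
      have h3 : 0 ≤ 4 * K ^ 3 * t ^ 3 * x := by positivity
      have h4 : 0 ≤ (K * t * x) ^ 2 := by positivity
      nlinarith
  have hsum := Finset.sum_le_sum fun T (_ : T ∈ (Finset.univ : Finset (Finset ι))) => hpt T
  rw [Finset.sum_add_distrib, ← Finset.mul_sum, ← Finset.mul_sum, h2] at hsum
  have h27 : (27:ℝ) ^ r = 9 ^ r * 3 ^ r := by rw [← mul_pow]; norm_num
  rw [h27] at hsum
  have hpos : (0:ℝ) < 9 ^ r * t ^ 3 := by positivity
  refine le_of_mul_le_mul_left ?_ hpos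
  nlinarith
end KH

section BL

lemma blei_pt (m : ℕ) (hm : 0 < m) (x : ℝ) (hx : 0 ≤ x) (b : Fin m → ℝ) (hb : ∀ k, x ≤ b k) :
    x ^ (2 * (m:ℝ) / (m + 1)) ≤ (1 / ((m:ℝ) + 1)) * (∏ k, b k + ∑ k, x ^ 2 / b k) := by
  have hb0 : ∀ k, 0 ≤ b k := fun k => hx.trans (hb k)
  have hm1 : (0:ℝ) < m + 1 := by positivity
  rcases hx.eq_or_lt with h | h
  · rw [← h, Real.zero_rpow (by positivity)]
    have : 0 ≤ ∏ k, b k := Finset.prod_nonneg fun k _ => hb0 k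
    simp
    positivity
  have hbp : ∀ k, 0 < b k := fun k => h.trans_le (hb k)
  set z : Fin (m+1) → ℝ := Fin.cons (∏ k, b k) (fun k => x ^ 2 / b k) with hz
  have hz0 : ∀ k, 0 ≤ z k := by
    intro k
    refine Fin.cases ?_ (fun k => ?_) k
    · simp only [hz, Fin.cons_zero]; exact Finset.prod_nonneg fun k _ => hb0 k
    · simp [hz]; exact div_nonneg (sq_nonneg _) (hb0 k)
  have := Real.geom_mean_le_arith_mean_weighted Finset.univ (fun _ : Fin (m+1) => 1 / ((m:ℝ) + 1)) z
    (fun _ _ => by positivity) (by simp; field_simp) (fun k _ => hz0 k)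
  rw [Real.finsetProd_rpow _ _ (fun k _ => hz0 k), ← Finset.mul_sum, Fin.prod_univ_succ, Fin.sum_univ_succ] at this
  simp only [hz, Fin.cons_zero, Fin.cons_succ] at this
  refine le_trans (le_of_eq ?_) this
  rw [Finset.prod_div_distrib, mul_div_cancel₀ _ (Finset.prod_pos fun k _ => hbp k).ne']
  rw [Finset.prod_const, Finset.card_univ, Fintype.card_fin, ← pow_mul, ← Real.rpow_natCast, ← Real.rpow_mul hx]
  congr 1
  push_cast
  field_simp

noncomputable def bk {m n : ℕ} (c : (Fin m → Fin n) → ℝ) (k : Fin m) (j : Fin n) : ℝ :=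
  Real.sqrt (∑ i : Fin m → Fin n, (if i k = j then c i else 0) ^ 2)

lemma blei_one (m n : ℕ) (hm : 0 < m) (c : (Fin m → Fin n) → ℝ) (h : ∀ k, ∑ j, bk c k j ≤ 1) :
    ∑ i, |c i| ^ (2 * (m:ℝ) / (m + 1)) ≤ 1 := by
  have hb0 : ∀ k j, 0 ≤ bk c k j := fun k j => Real.sqrt_nonneg _
  have hle : ∀ i k, |c i| ≤ bk c k (i k) := by
    intro i k
    refine Real.abs_le_sqrt ?_
    have := Finset.single_le_sum (f := fun i' : Fin m → Fin n => (if i' k = i k then c i' else 0) ^ 2)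
      (fun _ _ => sq_nonneg _) (Finset.mem_univ i)
    simpa using this
  have hm1 : (0:ℝ) < m + 1 := by positivity
  calc ∑ i, |c i| ^ (2 * (m:ℝ) / (m + 1))
      ≤ ∑ i : Fin m → Fin n, (1 / ((m:ℝ) + 1)) * (∏ k, bk c k (i k) + ∑ k, |c i| ^ 2 / bk c k (i k)) :=
        Finset.sum_le_sum fun i _ => blei_pt m hm _ (abs_nonneg _) _ (hle i)
    _ = (1 / ((m:ℝ) + 1)) * (∏ k, ∑ j, bk c k j + ∑ k, ∑ j, bk c k j) := by
        rw [← Finset.mul_sum, Finset.sum_add_distrib, Finset.prod_univ_sum, Finset.sum_comm]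
        congr 2
        refine Finset.sum_congr rfl fun k _ => ?_
        rw [← Finset.sum_fiberwise (s := Finset.univ) (g := fun i : Fin m → Fin n => i k)]
        refine Finset.sum_congr rfl fun j _ => ?_
        have e : ∑ i with i k = j, |c i| ^ 2 / bk c k (i k) = (bk c k j) ^ 2 / bk c k j := by
          conv_rhs => rw [bk, Real.sq_sqrt (Finset.sum_nonneg fun _ _ => sq_nonneg _)]
          rw [Finset.sum_div, Finset.sum_filter]
          refine Finset.sum_congr rfl fun i _ => ?_
          split_ifs with hij
          · rw [hij, sq_abs]; rfl
          · simp
        rw [e, pow_two, mul_self_div_self]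
    _ ≤ (1 / ((m:ℝ) + 1)) * (1 + ∑ k : Fin m, 1) := by
        gcongr with k
        · exact Finset.prod_le_one (fun k _ => Finset.sum_nonneg fun j _ => hb0 k j) (fun k _ => h k)
        · exact h k
    _ = 1 := by simp; field_simp; ring

lemma blei (m n : ℕ) (hm : 0 < m) (c : (Fin m → Fin n) → ℝ) (M : ℝ) (hM : 0 < M)
    (h : ∀ k, ∑ j, bk c k j ≤ M) :
    ∑ i, |c i| ^ (2 * (m:ℝ) / (m + 1)) ≤ M ^ (2 * (m:ℝ) / (m + 1)) := by
  have hb : ∀ k j, bk (fun i => c i / M) k j = bk c k j / M := by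
    intro k j
    unfold bk
    rw [← Real.sqrt_sq hM.le, ← Real.sqrt_div' _ (sq_nonneg _), Finset.sum_div]
    congr 1
    refine Finset.sum_congr rfl fun i _ => ?_
    rw [Real.sqrt_sq hM.le, ← div_pow]
    split_ifs <;> simp
  have := blei_one m n hm (fun i => c i / M) (fun k => by
    simp only [hb]
    rw [← Finset.sum_div, div_le_one hM]; exact h k)
  simp only [abs_div, abs_of_pos hM, Real.div_rpow (abs_nonneg _) hM.le] at this
  rwa [← Finset.sum_div, div_le_one (by positivity)] at this

lemma mixed (m n : ℕ) (c : (Fin m → Fin n) → ℝ) (B : ℝ)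
    (hB : ∀ y : Fin m → Fin n → ℝ, (∀ l j, |y l j| ≤ 1) → |∑ i, c i * ∏ l, y l (i l)| ≤ B) (k : Fin m) :
    ∑ j, bk c k j ≤ 4 * 3 ^ m * B := by
  classical
  let f : (Fin m → Fin n) → Finset (Fin m × Fin n) := fun i => Finset.univ.image fun l => (l, i l)
  have hf : Function.Injective f := by
    intro i i' h
    ext l
    have : (l, i l) ∈ f i' := by rw [← h]; simp [f]
    simp [f] at this
    rw [this]
  have hr : ∀ i, (f i).card ≤ m := fun i => Finset.card_image_le.trans (by simp)
  have hprod : ∀ i (T : Finset (Fin m × Fin n)), ∏ x ∈ f i, (if x ∈ T then (-1 : ℝ) else 1) =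
      ∏ l, (if (l, i l) ∈ T then (-1 : ℝ) else 1) := by
    intro i T
    exact Finset.prod_image (fun a _ b _ h => (Prod.ext_iff.1 h).1)
  have hk := fun j => khinchine m f hf hr (fun i => if i k = j then c i else 0)
  simp only [hprod] at hk
  set N : ℝ := 2 ^ Fintype.card (Fin m × Fin n) with hN
  have hNp : 0 < N := by positivity
  have hT : ∀ T : Finset (Fin m × Fin n), ∑ j, |∑ i : Fin m → Fin n, (if i k = j then c i else 0) * ∏ l, (if (l, i l) ∈ T then (-1 : ℝ) else 1)| ≤ B := by
    intro T
    set F : Fin n → ℝ := fun j => ∑ i : Fin m → Fin n, (if i k = j then c i else 0) * ∏ l, (if (l, i l) ∈ T then (-1 : ℝ) else 1) with hF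
    set s : Fin n → ℝ := fun j => if 0 ≤ F j then 1 else -1 with hs
    have hsF : ∀ j, |F j| = s j * F j := by
      intro j
      simp only [hs]
      split_ifs with h
      · rw [abs_of_nonneg h, one_mul]
      · rw [abs_of_neg (not_le.1 h)]; ring
    have hs1 : ∀ j, |s j| = 1 := by intro j; simp only [hs]; split_ifs <;> simp
    have := hB (fun l j => (if l = k then s j else 1) * (if (l, j) ∈ T then (-1 : ℝ) else 1)) (by
      intro l j
      rw [abs_mul]
      split_ifs <;> simp [hs1])
    refine le_trans (le_of_eq ?_) ((le_abs_self _).trans this)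
    change ∑ j, |F j| = _
    simp only [hsF]
    simp only [hF, Finset.mul_sum]
    rw [Finset.sum_comm]
    refine Finset.sum_congr rfl fun i _ => ?_
    rw [Finset.prod_mul_distrib, Finset.prod_ite_eq' Finset.univ k (fun l => s (i l))]
    rw [Finset.sum_eq_single (i k)]
    · simp; ring
    · intro j _ hj; simp [hj.symm]
    · simp
  refine le_of_mul_le_mul_left ?_ hNp
  calc N * ∑ j, bk c k j = ∑ j, N * bk c k j := Finset.mul_sum _ _ _
    _ ≤ ∑ j, 4 * 3 ^ m * ∑ T : Finset (Fin m × Fin n), |∑ i : Fin m → Fin n, (if i k = j then c i else 0) * ∏ l, (if (l, i l) ∈ T then (-1 : ℝ) else 1)| :=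
      Finset.sum_le_sum fun j _ => hk j
    _ = 4 * 3 ^ m * ∑ T : Finset (Fin m × Fin n), ∑ j, |∑ i : Fin m → Fin n, (if i k = j then c i else 0) * ∏ l, (if (l, i l) ∈ T then (-1 : ℝ) else 1)| := by
      rw [← Finset.mul_sum, Finset.sum_comm]
    _ ≤ 4 * 3 ^ m * ∑ T : Finset (Fin m × Fin n), B := by
      gcongr with T; exact hT T
    _ = N * (4 * 3 ^ m * B) := by
      simp [hN]; ring
end BL

section POL

lemma sgn_sum {m : ℕ} (f : Fin m → Fin m) :
    ∑ ε : Fin m → ℤˣ, (∏ k, (((ε k : ℤˣ) : ℤ) : ℝ)) * (∏ l, (((ε (f l) : ℤˣ) : ℤ) : ℝ)) =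
      if Function.Bijective f then 2 ^ m else 0 := by
  classical
  split_ifs with hf
  · have : ∀ ε : Fin m → ℤˣ, (∏ k, (((ε k : ℤˣ) : ℤ) : ℝ)) * (∏ l, (((ε (f l) : ℤˣ) : ℤ) : ℝ)) = 1 := by
      intro ε
      rw [hf.prod_comp (fun k => (((ε k : ℤˣ) : ℤ) : ℝ)), ← Finset.prod_mul_distrib]
      refine Finset.prod_eq_one fun k _ => ?_
      rcases Int.units_eq_one_or (ε k) with h | h <;> simp [h]
    simp [this]
  · have hs : ¬ Function.Surjective f := fun h => hf (Finite.surjective_iff_bijective.1 h)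
    simp only [Function.Surjective, not_forall, not_exists] at hs
    obtain ⟨k, hk⟩ := hs
    set S := ∑ ε : Fin m → ℤˣ, (∏ k, (((ε k : ℤˣ) : ℤ) : ℝ)) * (∏ l, (((ε (f l) : ℤˣ) : ℤ) : ℝ)) with hS
    have : S = -S := by
      conv_lhs => rw [hS, ← Equiv.sum_comp (Equiv.mulLeft (Pi.mulSingle k (-1 : ℤˣ)))]
      rw [hS, ← Finset.sum_neg_distrib]
      refine Finset.sum_congr rfl fun ε _ => ?_
      simp only [Equiv.coe_mulLeft, Pi.mul_apply, Units.val_mul, Int.cast_mul, Finset.prod_mul_distrib]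
      have h1 : ∏ x, (((Pi.mulSingle k (-1 : ℤˣ) : Fin m → ℤˣ) x : ℤ) : ℝ) = -1 := by
        rw [Finset.prod_eq_single k]
        · simp
        · intro j _ hj; simp [Pi.mulSingle_eq_of_ne hj]
        · simp
      have h2 : ∏ x, (((Pi.mulSingle k (-1 : ℤˣ) : Fin m → ℤˣ) (f x) : ℤ) : ℝ) = 1 := by
        refine Finset.prod_eq_one fun x _ => ?_
        simp [Pi.mulSingle_eq_of_ne (hk x)]
      rw [h1, h2]; ring
    linarith

lemma polar {m n : ℕ} (b : (Fin m → Fin n) → ℝ) (y : Fin m → Fin n → ℝ) :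
    ∑ ε : Fin m → ℤˣ, (∏ k, (((ε k : ℤˣ) : ℤ) : ℝ)) *
      (∑ i, b i * ∏ l, ∑ k, (((ε k : ℤˣ) : ℤ) : ℝ) * y k (i l)) =
    2 ^ m * ∑ i, (∑ σ : Equiv.Perm (Fin m), b (i ∘ σ)) * ∏ l, y l (i l) := by
  classical
  have h1 : ∀ i : Fin m → Fin n, ∑ ε : Fin m → ℤˣ, (∏ k, (((ε k : ℤˣ) : ℤ) : ℝ)) *
      (b i * ∏ l, ∑ k, (((ε k : ℤˣ) : ℤ) : ℝ) * y k (i l)) =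
      2 ^ m * ∑ σ : Equiv.Perm (Fin m), b i * ∏ l, y (σ l) (i l) := by
    intro i
    have : ∀ ε : Fin m → ℤˣ, (∏ k, (((ε k : ℤˣ) : ℤ) : ℝ)) *
      (b i * ∏ l, ∑ k, (((ε k : ℤˣ) : ℤ) : ℝ) * y k (i l)) =
      ∑ f : Fin m → Fin m, (b i * ∏ l, y (f l) (i l)) * ((∏ k, (((ε k : ℤˣ) : ℤ) : ℝ)) * ∏ l, (((ε (f l) : ℤˣ) : ℤ) : ℝ)) := by
      intro ε
      rw [Finset.prod_univ_sum, Finset.mul_sum, Finset.mul_sum, Fintype.piFinset_univ]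
      refine Finset.sum_congr rfl fun f _ => ?_
      rw [Finset.prod_mul_distrib]; ring
    simp only [this]
    rw [Finset.sum_comm]
    simp only [← Finset.mul_sum, sgn_sum]
    rw [Finset.mul_sum, Finset.mul_sum]
    symm
    refine Finset.sum_of_injOn (fun σ : Equiv.Perm (Fin m) => (σ : Fin m → Fin m))
      (fun a _ b _ h => Equiv.coe_fn_injective h) (fun _ _ => by simp) ?_ ?_
    · intro f _ hf
      rw [if_neg, mul_zero]
      intro hb
      exact hf ⟨Equiv.ofBijective f hb, by simp, rfl⟩
    · intro σ _
      rw [if_pos σ.bijective]; ring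
  simp only [Finset.mul_sum (s := (Finset.univ : Finset (Fin m → Fin n)))]
  rw [Finset.sum_comm]
  simp only [h1]
  rw [← Finset.mul_sum, ← Finset.mul_sum]
  congr 1
  simp only [Finset.sum_mul]
  rw [Finset.sum_comm, Finset.sum_comm (s := (Finset.univ : Finset (Fin m → Fin n)))]
  refine Finset.sum_congr rfl fun σ _ => ?_
  rw [← Equiv.sum_comp (Equiv.arrowCongr σ.symm (Equiv.refl (Fin n)))]
  refine Finset.sum_congr rfl fun i _ => ?_
  have : (Equiv.arrowCongr σ.symm (Equiv.refl (Fin n))) i = i ∘ σ := by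
    ext l; simp [Equiv.arrowCongr]
  rw [this]
  congr 1
  exact Equiv.prod_comp σ (fun l => y l (i l))

lemma supNorm_bdd {n : ℕ} (P : MvPolynomial (Fin n) ℝ) :
    BddAbove {y : ℝ | ∃ x : Fin n → ℝ, (∀ i, |x i| ≤ 1) ∧ y = |eval x P|} := by
  refine ⟨∑ α ∈ P.support, |coeff α P|, ?_⟩
  rintro y ⟨x, hx, rfl⟩
  rw [eval_eq]
  refine (Finset.abs_sum_le_sum_abs _ _).trans (Finset.sum_le_sum fun α _ => ?_)
  rw [abs_mul, Finset.abs_prod]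
  refine mul_le_of_le_one_right (abs_nonneg _) (Finset.prod_le_one (fun _ _ => abs_nonneg _) fun i _ => ?_)
  rw [abs_pow]
  exact pow_le_one₀ (abs_nonneg _) (hx i)

lemma le_supNorm {n : ℕ} (P : MvPolynomial (Fin n) ℝ) (x : Fin n → ℝ) (hx : ∀ i, |x i| ≤ 1) :
    |eval x P| ≤ supNorm P := le_csSup (supNorm_bdd P) ⟨x, hx, rfl⟩

noncomputable def ty {m n : ℕ} (i : Fin m → Fin n) : Fin n →₀ ℕ := ∑ l, Finsupp.single (i l) 1

lemma ty_comp {m n : ℕ} (i : Fin m → Fin n) (σ : Equiv.Perm (Fin m)) : ty (i ∘ σ) = ty i :=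
  Equiv.sum_comp σ (fun l => Finsupp.single (i l) 1)

lemma exists_ty {m n : ℕ} (α : Fin n →₀ ℕ) (h : α.degree = m) : ∃ i : Fin m → Fin n, ty i = α := by
  induction m generalizing α with
  | zero =>
    refine ⟨Fin.elim0, ?_⟩
    rw [Finsupp.degree_eq_zero_iff] at h
    simp [ty, h]
  | succ m ih =>
    have hne : α ≠ 0 := by rintro rfl; simp at h
    obtain ⟨j, hj⟩ := Finsupp.ne_iff.1 hne
    have hle : Finsupp.single j 1 ≤ α := by
      rw [Finsupp.single_le_iff]; exact Nat.one_le_iff_ne_zero.2 hj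
    have hs : Finsupp.single j 1 + (α - Finsupp.single j 1) = α := add_tsub_cancel_of_le hle
    have hd : (α - Finsupp.single j 1).degree = m := by
      have := congrArg Finsupp.degree hs
      rw [map_add, h, Finsupp.degree_single] at this
      omega
    obtain ⟨i, hi⟩ := ih _ hd
    refine ⟨Fin.cons j i, ?_⟩
    rw [ty, Fin.sum_univ_succ]
    simp only [Fin.cons_zero, Fin.cons_succ]
    rw [← hs]; congr 1

lemma prod_ty {m n : ℕ} (i : Fin m → Fin n) (x : Fin n → ℝ) : ∏ j, x j ^ (ty i j) = ∏ l, x (i l) := by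
  simp only [ty, Finsupp.coe_finsetSum, Finset.sum_apply, ← Finset.prod_pow_eq_pow_sum]
  rw [Finset.prod_comm]
  refine Finset.prod_congr rfl fun l _ => ?_
  rw [Finset.prod_eq_single (i l)]
  · simp
  · intro j _ hj; simp [hj.symm]
  · simp

lemma BH_exists (m : ℕ) (hm : 0 < m) (n : ℕ) (P : MvPolynomial (Fin n) ℝ) (hP : P.IsHomogeneous m) :
    lpNorm (2 * m / (m + 1)) P ≤ (4 * 3 ^ m * m ^ m) * supNorm P := by
  classical
  have hdeg : ∀ α ∈ P.support, α.degree = m := by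
    intro α hα
    rw [← hP (mem_support_iff.1 hα), Finsupp.degree_eq_weight_one]; rfl
  have hs0 : 0 ≤ supNorm P := Real.sSup_nonneg (by rintro y ⟨x, _, rfl⟩; exact abs_nonneg _)
  have hp : (0:ℝ) < 2 * m / (m + 1) := by positivity
  rcases P.support.eq_empty_or_nonempty with hemp | ⟨α₀, hα₀⟩
  · rw [lpNorm, hemp, Finset.sum_empty, Real.zero_rpow (by positivity)]
    positivity
  obtain ⟨i₀, _⟩ := exists_ty α₀ (hdeg α₀ hα₀)
  have hch : ∀ α : Fin n →₀ ℕ, ∃ i : Fin m → Fin n, α ∈ P.support → ty i = α := by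
    intro α
    by_cases h : α ∈ P.support
    · obtain ⟨i, hi⟩ := exists_ty α (hdeg α h)
      exact ⟨i, fun _ => hi⟩
    · exact ⟨i₀, fun h' => absurd h' h⟩
  choose j hj using hch
  set b : (Fin m → Fin n) → ℝ := fun i => if j (ty i) = i then coeff (ty i) P else 0 with hb
  have hinj : Set.InjOn j (P.support : Set (Fin n →₀ ℕ)) := by
    intro α hα β hβ h
    rw [← hj α hα, h, hj β hβ]
  have heval : ∀ x : Fin n → ℝ, eval x P = ∑ i, b i * ∏ l, x (i l) := by
    intro x
    rw [eval_eq']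
    refine Finset.sum_of_injOn j hinj (fun _ _ => by simp) ?_ ?_
    · intro i _ hi
      simp only [hb]
      split_ifs with h
      · by_cases hs : ty i ∈ P.support
        · exact absurd ⟨_, hs, h⟩ hi
        · rw [notMem_support_iff.1 hs, zero_mul]
      · rw [zero_mul]
    · intro α hα
      simp only [hb, hj α hα, if_true]
      rw [← prod_ty, hj α hα]
  set c : (Fin m → Fin n) → ℝ := fun i => ∑ σ : Equiv.Perm (Fin m), b (i ∘ σ) with hc
  have hcj : ∀ α ∈ P.support, |coeff α P| ≤ |c (j α)| := by
    intro α hα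
    simp only [hc, hb, ty_comp, hj α hα]
    rw [Finset.sum_ite, Finset.sum_const_zero, add_zero, Finset.sum_const, nsmul_eq_mul, abs_mul]
    refine le_mul_of_one_le_left (abs_nonneg _) ?_
    rw [Nat.abs_cast]
    have : 0 < (Finset.univ.filter fun σ : Equiv.Perm (Fin m) => j α = j α ∘ σ).card :=
      Finset.card_pos.2 ⟨1, by simp⟩
    exact_mod_cast this
  have hm0 : (0:ℝ) < m := by exact_mod_cast hm
  have hB : ∀ y : Fin m → Fin n → ℝ, (∀ l j, |y l j| ≤ 1) →
      |∑ i, c i * ∏ l, y l (i l)| ≤ m ^ m * supNorm P := by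
    intro y hy
    have hpol := polar b y
    have hε : ∀ (ε : Fin m → ℤˣ) (k : Fin m), |(((ε k : ℤˣ) : ℤ) : ℝ)| = 1 := by
      intro ε k
      rcases Int.units_eq_one_or (ε k) with h | h <;> simp [h]
    have hbd : ∀ ε : Fin m → ℤˣ, |(∏ k, (((ε k : ℤˣ) : ℤ) : ℝ)) *
      (∑ i, b i * ∏ l, ∑ k, (((ε k : ℤˣ) : ℤ) : ℝ) * y k (i l))| ≤ m ^ m * supNorm P := by
      intro ε
      rw [abs_mul, Finset.abs_prod]
      simp only [hε, Finset.prod_const_one, one_mul]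
      set z : Fin n → ℝ := fun j => (∑ k, (((ε k : ℤˣ) : ℤ) : ℝ) * y k j) / m with hz
      have hz1 : ∀ j, |z j| ≤ 1 := by
        intro j
        simp only [hz]
        rw [abs_div, abs_of_pos hm0, div_le_one hm0]
        refine (Finset.abs_sum_le_sum_abs _ _).trans ?_
        calc ∑ k, |(((ε k : ℤˣ) : ℤ) : ℝ) * y k j| ≤ ∑ k : Fin m, (1:ℝ) :=
              Finset.sum_le_sum fun k _ => by rw [abs_mul, hε, one_mul]; exact hy k j
          _ = m := by simp
      have := le_supNorm P z hz1
      have e : ∑ i, b i * ∏ l, ∑ k, (((ε k : ℤˣ) : ℤ) : ℝ) * y k (i l) = m ^ m * eval z P := by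
        rw [heval, Finset.mul_sum]
        refine Finset.sum_congr rfl fun i _ => ?_
        simp only [hz, Finset.prod_div_distrib, Finset.prod_const, Finset.card_univ, Fintype.card_fin]
        field_simp
      rw [e, abs_mul, abs_of_pos (by positivity : (0:ℝ) < (m:ℝ) ^ m)]
      gcongr
    have h2 : (2:ℝ) ^ m * |∑ i, c i * ∏ l, y l (i l)| ≤ 2 ^ m * (m ^ m * supNorm P) := by
      rw [← abs_of_pos (by positivity : (0:ℝ) < 2 ^ m), ← abs_mul, abs_of_pos (by positivity : (0:ℝ) < 2 ^ m),
        ← hpol]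
      refine (Finset.abs_sum_le_sum_abs _ _).trans ((Finset.sum_le_sum fun ε _ => hbd ε).trans ?_)
      simp
    exact le_of_mul_le_mul_left h2 (by positivity)
  refine le_of_forall_gt_imp_ge_of_dense fun M hM => ?_
  have hM0 : 0 < M := lt_of_le_of_lt (by positivity) hM
  have hbl := blei m n hm c M hM0 (fun k => (mixed m n c _ hB k).trans (by rw [← mul_assoc]; exact hM.le))
  have hsum : ∑ α ∈ P.support, |coeff α P| ^ (2 * (m:ℝ) / (m + 1)) ≤ M ^ (2 * (m:ℝ) / (m + 1)) := by
    refine le_trans ?_ hbl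
    calc ∑ α ∈ P.support, |coeff α P| ^ (2 * (m:ℝ) / (m + 1))
        ≤ ∑ α ∈ P.support, |c (j α)| ^ (2 * (m:ℝ) / (m + 1)) :=
          Finset.sum_le_sum fun α hα => Real.rpow_le_rpow (abs_nonneg _) (hcj α hα) hp.le
      _ = ∑ i ∈ P.support.image j, |c i| ^ (2 * (m:ℝ) / (m + 1)) := (Finset.sum_image (f := fun i => |c i| ^ (2 * (m:ℝ) / (m + 1))) hinj).symm
      _ ≤ _ := Finset.sum_le_sum_of_subset_of_nonneg (Finset.subset_univ _) fun _ _ _ => by positivity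
  unfold lpNorm
  calc _ ≤ (M ^ (2 * (m:ℝ) / (m + 1))) ^ (1 / (2 * (m:ℝ) / (m + 1))) := by gcongr
    _ = M := by rw [← Real.rpow_mul hM0.le, mul_one_div_cancel hp.ne', Real.rpow_one]
end POL

section LOW

abbrev Vr (k : ℕ) := Bool ⊕ (Bool × Fin k × Bool)
abbrev Tm (k : ℕ) := Bool × Bool × (Fin k → Fin 3)

def qe : Fin 3 → Bool → ℕ
  | 0, false => 2
  | 0, true => 0
  | 1, false => 0
  | 1, true => 2
  | 2, _ => 1

def qs : Fin 3 → ℝ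
  | 0 => 1
  | 1 => -1
  | 2 => 1

def ss : Bool → Bool → ℝ
  | true, true => -1
  | _, _ => 1

def ex {k : ℕ} (t : Tm k) : Vr k → ℕ
  | Sum.inl u => if u = t.1 then 1 else 0
  | Sum.inr w => if w.1 = t.2.1 then qe (t.2.2 w.2.1) w.2.2 else 0

noncomputable def sg {k : ℕ} (t : Tm k) : ℝ := ss t.1 t.2.1 * ∏ l, qs (t.2.2 l)

lemma qe_inj : ∀ a b : Fin 3, (∀ c, qe a c = qe b c) → a = b := by decide

lemma qe_ne : ∀ a : Fin 3, ∃ c, qe a c ≠ 0 := by decide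

lemma qe_sum : ∀ a : Fin 3, qe a true + qe a false = 2 := by decide

lemma ex_inj {k : ℕ} (hk : 0 < k) : Function.Injective (ex (k := k)) := by
  rintro ⟨u, v, g⟩ ⟨u', v', g'⟩ h
  have h1 : u = u' := by
    have := congrFun h (Sum.inl u)
    simp [ex] at this
    by_contra hne
    simp [hne] at this
  have h2 : v = v' := by
    obtain ⟨c, hc⟩ := qe_ne (g ⟨0, hk⟩)
    have := congrFun h (Sum.inr (v, ⟨0, hk⟩, c))
    simp [ex] at this
    by_contra hne
    simp [hne] at this
    exact hc this
  subst h1 h2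
  have h3 : g = g' := by
    funext l
    refine qe_inj _ _ fun c => ?_
    have := congrFun h (Sum.inr (v, l, c))
    simpa [ex] using this
  rw [h3]

lemma ex_sum {k : ℕ} (t : Tm k) : ∑ w, ex t w = 2 * k + 1 := by
  rw [Fintype.sum_sum_type]
  simp only [ex, Fintype.sum_prod_type]
  simp
  rw [Finset.sum_congr rfl (fun l _ => qe_sum (t.2.2 l))]
  simp; ring

lemma sg_abs {k : ℕ} (t : Tm k) : |sg t| = 1 := by
  have h1 : ∀ a, |qs a| = 1 := by intro a; fin_cases a <;> simp [qs]
  have h2 : ∀ a b, |ss a b| = 1 := by intro a b; cases a <;> cases b <;> simp [ss]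
  rw [sg, abs_mul, h2, Finset.abs_prod]
  simp [h1]

lemma ev_sum {k : ℕ} (x : Vr k → ℝ) : ∑ t : Tm k, sg t * ∏ w, x w ^ ex t w =
    (x (Sum.inl true) + x (Sum.inl false)) *
      ∏ l, ((x (Sum.inr (false, l, false))) ^ 2 - (x (Sum.inr (false, l, true))) ^ 2 + x (Sum.inr (false, l, false)) * x (Sum.inr (false, l, true))) +
    (x (Sum.inl false) - x (Sum.inl true)) *
      ∏ l, ((x (Sum.inr (true, l, false))) ^ 2 - (x (Sum.inr (true, l, true))) ^ 2 + x (Sum.inr (true, l, false)) * x (Sum.inr (true, l, true))) := by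
  have hq : ∀ v, ∏ l, ((x (Sum.inr (v, l, false))) ^ 2 - (x (Sum.inr (v, l, true))) ^ 2 + x (Sum.inr (v, l, false)) * x (Sum.inr (v, l, true)))
      = ∑ g : Fin k → Fin 3, ∏ l, (qs (g l) * ∏ c, x (Sum.inr (v, l, c)) ^ qe (g l) c) := by
    intro v
    rw [← Fintype.piFinset_univ, ← Finset.prod_univ_sum (fun _ : Fin k => (Finset.univ : Finset (Fin 3))) (fun l a => qs a * ∏ c, x (Sum.inr (v, l, c)) ^ qe a c)]
    refine Finset.prod_congr rfl fun l _ => ?_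
    simp [Fin.sum_univ_three, qs, qe]
    ring
  have ht : ∀ u v (g : Fin k → Fin 3), sg (u, v, g) * ∏ w, x w ^ ex (u, v, g) w =
      ss u v * x (Sum.inl u) * ∏ l, (qs (g l) * ∏ c, x (Sum.inr (v, l, c)) ^ qe (g l) c) := by
    intro u v g
    rw [Fintype.prod_sum_type, Fintype.prod_prod_type, Finset.prod_mul_distrib]
    have e1 : ∏ a, x (Sum.inl a) ^ ex (u, v, g) (Sum.inl a) = x (Sum.inl u) := by
      simp [ex, pow_ite]
    have e2 : ∏ v', ∏ w, x (Sum.inr (v', w)) ^ ex (u, v, g) (Sum.inr (v', w)) = 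
        ∏ l, ∏ c, x (Sum.inr (v, l, c)) ^ qe (g l) c := by
      rw [Finset.prod_eq_single v]
      · rw [Fintype.prod_prod_type]; simp [ex]
      · intro v' _ hv; simp [ex, hv]
      · simp
    rw [e1, e2, sg]
    ring
  simp only [Fintype.sum_prod_type, ht, ← Finset.mul_sum, ← hq]
  simp [ss]
  ring

lemma q_bd (a b : ℝ) (ha : |a| ≤ 1) (hb : |b| ≤ 1) : |a ^ 2 - b ^ 2 + a * b| ≤ 5 / 4 := by
  have h1 : a ^ 2 ≤ 1 := by rw [← sq_abs]; nlinarith [abs_nonneg a]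
  have h2 : b ^ 2 ≤ 1 := by rw [← sq_abs]; nlinarith [abs_nonneg b]
  rw [abs_le]
  constructor
  · nlinarith [sq_nonneg (a + b / 2)]
  · nlinarith [sq_nonneg (b - a / 2)]

lemma ev_bd {k : ℕ} (x : Vr k → ℝ) (hx : ∀ w, |x w| ≤ 1) :
    |∑ t : Tm k, sg t * ∏ w, x w ^ ex t w| ≤ 2 * (5 / 4) ^ k := by
  rw [ev_sum]
  have hQ : ∀ v, |∏ l, ((x (Sum.inr (v, l, false))) ^ 2 - (x (Sum.inr (v, l, true))) ^ 2 + x (Sum.inr (v, l, false)) * x (Sum.inr (v, l, true)))| ≤ (5 / 4) ^ k := by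
    intro v
    rw [Finset.abs_prod]
    refine (Finset.prod_le_prod (fun _ _ => abs_nonneg _) (fun l _ => q_bd _ _ (hx _) (hx _))).trans ?_
    rw [Finset.prod_const, Finset.card_univ, Fintype.card_fin]
  refine (abs_add_le _ _).trans ?_
  rw [abs_mul, abs_mul]
  have hs : |x (Sum.inl true) + x (Sum.inl false)| + |x (Sum.inl false) - x (Sum.inl true)| ≤ 2 := by
    have h1 := abs_le.1 (hx (Sum.inl true))
    have h2 := abs_le.1 (hx (Sum.inl false))
    rcases abs_cases (x (Sum.inl true) + x (Sum.inl false)) with h | h <;>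
    rcases abs_cases (x (Sum.inl false) - x (Sum.inl true)) with h' | h' <;> linarith
  calc _ ≤ |x (Sum.inl true) + x (Sum.inl false)| * (5/4) ^ k + |x (Sum.inl false) - x (Sum.inl true)| * (5/4) ^ k := by
        gcongr
        · exact hQ false
        · exact hQ true
    _ = (|x (Sum.inl true) + x (Sum.inl false)| + |x (Sum.inl false) - x (Sum.inl true)|) * (5/4) ^ k := by ring
    _ ≤ _ := by gcongr

lemma exists_poly (k : ℕ) (hk : 0 < k) : ∃ (n : ℕ) (P : MvPolynomial (Fin n) ℝ),
    P.IsHomogeneous (2 * k + 1) ∧ supNorm P ≤ 2 * (5 / 4) ^ k ∧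
    ∀ p : ℝ, lpNorm p P = (4 * 3 ^ k) ^ (1 / p) := by
  classical
  let e := Fintype.equivFin (Vr k)
  let A : Tm k → (Fin (Fintype.card (Vr k)) →₀ ℕ) := fun t => Finsupp.equivFunOnFinite.symm (ex t ∘ e.symm)
  have hA : Function.Injective A := by
    intro t t' h
    have h' := Finsupp.equivFunOnFinite.symm.injective h
    refine ex_inj hk ?_
    funext w
    have := congrFun h' (e w)
    simpa using this
  let P : MvPolynomial (Fin (Fintype.card (Vr k))) ℝ := ∑ t, monomial (A t) (sg t)
  have hcoef : ∀ t, coeff (A t) P = sg t := by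
    intro t
    simp only [P, coeff_sum, coeff_monomial]
    rw [Finset.sum_eq_single t]
    · simp
    · intro t' _ h; rw [if_neg (fun h' => h (hA h'))]
    · simp
  have hcoef0 : ∀ α, (∀ t, A t ≠ α) → coeff α P = 0 := by
    intro α h
    simp only [P, coeff_sum, coeff_monomial]
    exact Finset.sum_eq_zero fun t _ => if_neg (h t)
  have hsupp : P.support = Finset.univ.image A := by
    ext α
    simp only [mem_support_iff, Finset.mem_image, Finset.mem_univ, true_and]
    constructor
    · intro h; by_contra hne; push Not at hne; exact h (hcoef0 α hne)
    · rintro ⟨t, rfl⟩ h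
      rw [hcoef] at h
      have := sg_abs t
      rw [h] at this; simp at this
  refine ⟨_, P, ?_, ?_, ?_⟩
  · refine IsHomogeneous.sum _ _ _ fun t _ => isHomogeneous_monomial _ ?_
    rw [Finsupp.degree_eq_sum]
    simp only [A, Finsupp.equivFunOnFinite_symm_apply_apply, Function.comp]
    rw [Equiv.sum_comp e.symm (ex t), ex_sum]
  · refine csSup_le ⟨_, 0, by simp, rfl⟩ ?_
    rintro y ⟨x, hx, rfl⟩
    have : eval x P = ∑ t : Tm k, sg t * ∏ w, (x (e w)) ^ ex t w := by
      simp only [P, map_sum, eval_monomial]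
      refine Finset.sum_congr rfl fun t _ => ?_
      rw [Finsupp.prod_fintype _ _ (by simp), ← Equiv.prod_comp e]
      simp [A]
    rw [this]
    exact ev_bd (fun w => x (e w)) fun w => hx _
  · intro p
    rw [lpNorm, hsupp, Finset.sum_image hA.injOn]
    simp only [hcoef, sg_abs, Real.one_rpow]
    simp
    ring_nf
end LOW

/-- For every odd integer `m > 1`,
`D_{ℝ,m} ≥ (4·3^{(m-1)/2})^{(m+1)/(2m)} / (2·(5/4)^{(m-1)/2})`, and in particular
`D_{ℝ,m} ≥ (2·3^{1/4}/√5)^{m-1}`. -/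
theorem real_BH_lower_odd (m : ℕ) (hm : 1 < m) (ho : Odd m) :
    (4 * (3 : ℝ) ^ ((m - 1) / 2)) ^ (((m : ℝ) + 1) / (2 * m)) /
        (2 * (5 / 4 : ℝ) ^ ((m - 1) / 2)) ≤ BHconst m ∧
    (2 * (3 : ℝ) ^ ((1 : ℝ) / 4) / Real.sqrt 5) ^ (m - 1) ≤ BHconst m := by
  obtain ⟨k, rfl⟩ := ho
  have hk : 0 < k := by omega
  have e1 : (2 * k + 1 - 1) / 2 = k := by omega
  have e2 : 2 * k + 1 - 1 = 2 * k := by omega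
  rw [e1, e2]
  have hmain : (4 * (3 : ℝ) ^ k) ^ ((((2 * k + 1 : ℕ) : ℝ) + 1) / (2 * ((2 * k + 1 : ℕ) : ℝ))) /
        (2 * (5 / 4 : ℝ) ^ k) ≤ BHconst (2 * k + 1) := by
    refine le_csInf ⟨_, ?_, fun n P hP => BH_exists (2 * k + 1) (by omega) n P hP⟩ ?_
    · positivity
    · rintro D ⟨hD, h⟩
      obtain ⟨n, P, hP, hs, hl⟩ := exists_poly k hk
      have := h n P hP
      rw [hl, one_div_div] at this
      rw [div_le_iff₀ (by positivity)]
      exact this.trans (by gcongr)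
  refine ⟨hmain, le_trans ?_ hmain⟩
  have h3 : (1:ℝ) ≤ 3 ^ k := one_le_pow₀ (by norm_num)
  have hexp : (1:ℝ) / 2 ≤ (((2 * k + 1 : ℕ) : ℝ) + 1) / (2 * ((2 * k + 1 : ℕ) : ℝ)) := by
    rw [div_le_div_iff₀ (by norm_num) (by positivity)]
    linarith
  have hle := Real.rpow_le_rpow_of_exponent_le (by linarith : (1:ℝ) ≤ 4 * 3 ^ k) hexp
  have hsq : (4 * (3:ℝ) ^ k) ^ ((1:ℝ) / 2) = 2 * (Real.sqrt 3) ^ k := by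
    rw [← Real.sqrt_eq_rpow, Real.sqrt_eq_iff_mul_self_eq (by positivity) (by positivity)]
    have : (Real.sqrt 3) ^ k * (Real.sqrt 3) ^ k = 3 ^ k := by
      rw [← mul_pow, Real.mul_self_sqrt (by norm_num)]
    linear_combination (-4) * this
  have h34 : ((3:ℝ) ^ ((1:ℝ) / 4)) ^ 2 = Real.sqrt 3 := by
    rw [← Real.rpow_natCast, ← Real.rpow_mul (by norm_num), Real.sqrt_eq_rpow]
    norm_num
  rw [pow_mul, div_pow, mul_pow, h34, Real.sq_sqrt (by norm_num), le_div_iff₀ (by positivity)]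
  refine le_trans (le_of_eq ?_) (hsq ▸ hle)
  have : (2 ^ 2 * Real.sqrt 3 / 5) ^ k * (5 / 4 : ℝ) ^ k = Real.sqrt 3 ^ k := by
    rw [← mul_pow]; congr 1; ring
  linear_combination 2 * this
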